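/- Let n ∈ ℕ, n ≥ 2, and let ν ∈ ℝ with n − 2 < ν < n − 1. Define κ(t) = ∑_{m=0}^∞ (−1)^m t^{m+ν} / (m! Γ(m+ν+1)) (equal to t^{ν/2} J_ν(2√t), where J_ν is the Bessel function) and k(t) = ∑_{m=0}^∞ t^{m+n−ν−2} / (m! Γ(m+n−ν−1)) (equal to t^{(n−ν)/2−1} I_{n−ν−2}(2√t), where I_μ is the modified Bessel function). Then (κ * k)(t) = t^{n−1}/(n−1)! for all t > 0; moreover κ ∈ C_{−1}(0,∞) and k ∈ C_{−1,0}(0,∞), so the pair (κ, k) belongs to L_n. -/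

import Mathlib

open Real MeasureTheory Set Filter Topology

/-- The Laplace convolution `(f * g)(t) = ∫₀ᵗ f(t-τ) g(τ) dτ`. -/
noncomputable def lconv (f g : ℝ → ℝ) : ℝ → ℝ :=
  fun t => ∫ τ in (0:ℝ)..t, f (t - τ) * g τ

/-- The space `C_{-1}(0,∞)`: functions of the form `t^p f₁(t)` with `p > -1`
and `f₁` continuous on `[0,∞)`. -/
def Cm1 (f : ℝ → ℝ) : Prop :=
  ∃ p : ℝ, -1 < p ∧ ∃ f₁ : ℝ → ℝ, ContinuousOn f₁ (Set.Ici 0) ∧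
    ∀ t : ℝ, 0 < t → f t = t ^ p * f₁ t

/-- The subspace `C_{-1,0}(0,∞)`: functions of the form `t^p f₁(t)` with `-1 < p < 0`
and `f₁` continuous on `[0,∞)`. -/
def Cm10 (f : ℝ → ℝ) : Prop :=
  ∃ p : ℝ, -1 < p ∧ p < 0 ∧ ∃ f₁ : ℝ → ℝ, ContinuousOn f₁ (Set.Ici 0) ∧
    ∀ t : ℝ, 0 < t → f t = t ^ p * f₁ t

/-! The kernel `t ↦ ∑ m, c ^ m / m! * t ^ (m + α - 1) / Γ (m + α)` has Laplace transform
`s ^ (-α) * exp (c / s)`, so these kernels form a two-parameter convolution semigroup in `(α, c)`.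
Here `κ` has parameters `(ν + 1, -1)` and `k` has parameters `(n - ν - 1, 1)`; their convolution has
parameters `(n, 0)`, which is `t ^ (n - 1) / Γ n`. In the time domain the semigroup law is the beta
integral applied to each pair of terms, followed by the binomial theorem on antidiagonals. -/

section Antidiagonal

theorem hasSum_sum_antidiagonal {A M : Type*} [AddMonoid A] [Finset.HasAntidiagonal A]
    [AddCommMonoid M] [TopologicalSpace M] [ContinuousAdd M] [RegularSpace M]
    {f : A × A → M} {s : M} (hf : HasSum f s) :
    HasSum (fun n => ∑ p ∈ Finset.HasAntidiagonal.antidiagonal n, f p) s := by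
  refine (Finset.HasAntidiagonal.sigmaAntidiagonalEquivProd.hasSum_iff.2 hf).sigma fun n => ?_
  rw [← Finset.sum_coe_sort]
  exact hasSum_fintype _

theorem sum_antidiagonal_pow_div_factorial {K : Type*} [Field K] [CharZero K] (c d : K) (n : ℕ) :
    ∑ p ∈ Finset.HasAntidiagonal.antidiagonal n,
        c ^ p.1 / p.1.factorial * (d ^ p.2 / p.2.factorial) =
      (c + d) ^ n / n.factorial := by
  rw [(Commute.all c d).add_pow', Finset.sum_div]
  refine Finset.sum_congr rfl fun p hp => ?_
  obtain rfl := Finset.HasAntidiagonal.mem_antidiagonal.1 hp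
  have hfactorial (m : ℕ) : (m.factorial : K) ≠ 0 := Nat.cast_ne_zero.2 m.factorial_ne_zero
  rw [nsmul_eq_mul, Nat.cast_add_choose]
  field_simp [hfactorial]

theorem hasSum_add_pow_div_factorial {K : Type*} [Field K] [CharZero K] [TopologicalSpace K]
    [ContinuousAdd K] [RegularSpace K] {c d s : K} {h : ℕ → K}
    (hs : HasSum (fun p : ℕ × ℕ =>
      c ^ p.1 / p.1.factorial * (d ^ p.2 / p.2.factorial) * h (p.1 + p.2)) s) :
    HasSum (fun n => (c + d) ^ n / n.factorial * h n) s := by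
  refine (hasSum_sum_antidiagonal hs).congr_fun fun n => ?_
  rw [← sum_antidiagonal_pow_div_factorial, Finset.sum_mul]
  exact Finset.sum_congr rfl fun p hp => by rw [Finset.HasAntidiagonal.mem_antidiagonal.1 hp]

end Antidiagonal

section Convolution

theorem lconv_congr {f f' g g' : ℝ → ℝ} {t : ℝ} (ht : 0 ≤ t) (hf : EqOn f f' (Ioo 0 t))
    (hg : EqOn g g' (Ioo 0 t)) : lconv f g t = lconv f' g' t := by
  refine intervalIntegral.integral_congr_Ioo_of_le ht fun τ hτ => ?_
  simp only [hf ⟨sub_pos.2 hτ.2, sub_lt_self t hτ.1⟩, hg hτ]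

theorem hasSum_lconv {ι ι' : Type*} [Countable ι] [Countable ι'] {a : ι → ℝ} {b : ι' → ℝ}
    {f : ι → ℝ → ℝ} {g : ι' → ℝ → ℝ} {t : ℝ} (ht : 0 ≤ t)
    (hf : ∀ i, ∀ s ∈ Ioo 0 t, 0 ≤ f i s) (hg : ∀ j, ∀ s ∈ Ioo 0 t, 0 ≤ g j s)
    (hfg : ∀ i j, IntervalIntegrable (fun τ => f i (t - τ) * g j τ) volume 0 t)
    (haf : ∀ s ∈ Ioo 0 t, Summable fun i => ‖a i * f i s‖)
    (hbg : ∀ s ∈ Ioo 0 t, Summable fun j => ‖b j * g j s‖)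
    (hsum : Summable fun p : ι × ι' => |a p.1 * b p.2| * lconv (f p.1) (g p.2) t) :
    HasSum (fun p : ι × ι' => a p.1 * b p.2 * lconv (f p.1) (g p.2) t)
      (lconv (fun s => ∑' i, a i * f i s) (fun s => ∑' j, b j * g j s) t) := by
  have lconv_eq (u v : ℝ → ℝ) : lconv u v t = ∫ τ in Ioo 0 t, u (t - τ) * v τ := by
    rw [lconv, intervalIntegral.integral_of_le ht, integral_Ioc_eq_integral_Ioo]
  have hreflect {τ : ℝ} (hτ : τ ∈ Ioo 0 t) : t - τ ∈ Ioo 0 t :=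
    ⟨sub_pos.2 hτ.2, sub_lt_self t hτ.1⟩
  let F (p : ι × ι') (τ : ℝ) : ℝ := a p.1 * b p.2 * (f p.1 (t - τ) * g p.2 τ)
  have hF_int (p : ι × ι') : Integrable (F p) (volume.restrict (Ioo 0 t)) :=
    ((intervalIntegrable_iff_integrableOn_Ioo_of_le ht).1 (hfg p.1 p.2)).const_mul _
  have hF_integral (p : ι × ι') :
      ∫ τ in Ioo 0 t, F p τ = a p.1 * b p.2 * lconv (f p.1) (g p.2) t := by
    rw [integral_const_mul, lconv_eq]
  have hF_norm (p : ι × ι') :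
      ∫ τ in Ioo 0 t, ‖F p τ‖ = |a p.1 * b p.2| * lconv (f p.1) (g p.2) t := by
    rw [lconv_eq, ← integral_const_mul]
    refine setIntegral_congr_fun measurableSet_Ioo fun τ hτ => ?_
    simp only [F, norm_mul, norm_of_nonneg (hf p.1 _ (hreflect hτ)), norm_of_nonneg (hg p.2 τ hτ),
      abs_mul, norm_eq_abs]
  have hF_tsum : ∀ τ ∈ Ioo 0 t,
      (∑' i, a i * f i (t - τ)) * ∑' j, b j * g j τ = ∑' p : ι × ι', F p τ := fun τ hτ => by
    rw [tsum_mul_tsum_of_summable_norm (haf _ (hreflect hτ)) (hbg τ hτ)]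
    exact tsum_congr fun p => mul_mul_mul_comm _ _ _ _
  rw [lconv_eq, setIntegral_congr_fun measurableSet_Ioo hF_tsum]
  simpa only [hF_integral] using
    hasSum_integral_of_summable_integral_norm hF_int (by simpa only [hF_norm] using hsum)

end Convolution

section PowerKernel

/-- The Riemann–Liouville kernel `t ^ (α - 1) / Γ(α)` of fractional integration of order `α`. -/
noncomputable def powerKernel (α t : ℝ) : ℝ :=
  t ^ (α - 1) / Real.Gamma α

variable {α β t : ℝ}

theorem powerKernel_pos (hα : 0 < α) (ht : 0 < t) : 0 < powerKernel α t :=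
  div_pos (rpow_pos_of_pos ht _) (Real.Gamma_pos_of_pos hα)

theorem powerKernel_natCast_add (ht : 0 < t) (m : ℕ) :
    powerKernel (m + α) t = t ^ (α - 1) * (t ^ m / Real.Gamma (m + α)) := by
  rw [powerKernel, add_sub_assoc, rpow_add ht, rpow_natCast]
  ring

theorem integral_rpow_mul_sub_rpow (hα : 0 < α) (hβ : 0 < β) (ht : 0 < t) :
    ∫ τ in 0..t, (t - τ) ^ (α - 1) * τ ^ (β - 1) =
      t ^ (α + β - 1) * ProbabilityTheory.beta α β := by
  have hcomplex : ∫ τ in 0..t, (τ : ℂ) ^ ((β : ℂ) - 1) * ((t : ℂ) - τ) ^ ((α : ℂ) - 1) =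
      ((∫ τ in 0..t, (t - τ) ^ (α - 1) * τ ^ (β - 1) : ℝ) : ℂ) := by
    rw [← intervalIntegral.integral_ofReal]
    refine intervalIntegral.integral_congr_Ioo_of_le ht.le fun τ hτ => ?_
    simp only [Complex.ofReal_mul, Complex.ofReal_cpow (sub_nonneg.2 hτ.2.le),
      Complex.ofReal_cpow hτ.1.le, Complex.ofReal_sub, Complex.ofReal_one, mul_comm]
  apply Complex.ofReal_injective
  rw [← hcomplex, Complex.betaIntegral_scaled _ _ ht,
    Complex.betaIntegral_eq_Gamma_mul_div _ _ (by simpa) (by simpa), ProbabilityTheory.beta]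
  simp only [Complex.ofReal_mul, Complex.ofReal_div, Complex.ofReal_cpow ht.le,
    ← Complex.Gamma_ofReal, Complex.ofReal_add, Complex.ofReal_sub, Complex.ofReal_one]
  ring_nf

theorem lconv_powerKernel (hα : 0 < α) (hβ : 0 < β) (ht : 0 < t) :
    lconv (powerKernel α) (powerKernel β) t = powerKernel (α + β) t := by
  have := (Real.Gamma_pos_of_pos hα).ne'
  have := (Real.Gamma_pos_of_pos hβ).ne'
  simp only [lconv, powerKernel, div_mul_div_comm, intervalIntegral.integral_div,
    integral_rpow_mul_sub_rpow hα hβ ht, ProbabilityTheory.beta]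
  field_simp

theorem intervalIntegrable_powerKernel_mul (hα : 0 < α) (hβ : 0 < β) (ht : 0 < t) :
    IntervalIntegrable (fun τ => powerKernel α (t - τ) * powerKernel β τ) volume 0 t := by
  apply intervalIntegral.intervalIntegrable_of_integral_ne_zero
  change lconv (powerKernel α) (powerKernel β) t ≠ 0
  exact lconv_powerKernel hα hβ ht ▸ (powerKernel_pos (add_pos hα hβ) ht).ne'

end PowerKernel

section BesselClifford

/-- The Bessel–Clifford function, indexed by the argument `α` of the first Gamma factor:
for `x > 0`, `x ^ ((α - 1) / 2) * besselClifford α x` is `I_{α-1}(2√x)`, and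
`x ^ ((α - 1) / 2) * besselClifford α (-x)` is `J_{α-1}(2√x)`. -/
noncomputable def besselClifford (α x : ℝ) : ℝ :=
  ∑' m : ℕ, x ^ m / (m.factorial * Real.Gamma (m + α))

theorem exists_pos_le_Gamma : ∃ δ > 0, ∀ x > 0, δ ≤ Real.Gamma x := by
  obtain ⟨x₀, hx₀, hmin⟩ := Real.exists_isMinOn_Gamma_Ioi
  exact ⟨Real.Gamma x₀, Real.Gamma_pos_of_pos (one_pos.trans hx₀.1), fun x hx => hmin hx⟩

variable {α : ℝ}

theorem summable_norm_besselClifford_term (hα : 0 < α) (x : ℝ) :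
    Summable fun m : ℕ => ‖x ^ m / (m.factorial * Real.Gamma (m + α))‖ := by
  obtain ⟨δ, hδ, hGamma⟩ := exists_pos_le_Gamma
  refine .of_nonneg_of_le (fun _ => norm_nonneg _) (fun m => ?_)
    ((summable_pow_div_factorial |x|).mul_left δ⁻¹)
  have hδ_le : δ ≤ Real.Gamma (m + α) := hGamma _ (by positivity)
  calc ‖x ^ m / (m.factorial * Real.Gamma (m + α))‖
      = |x| ^ m / (m.factorial * Real.Gamma (m + α)) := by
        rw [norm_div, norm_pow, norm_eq_abs,
          norm_of_nonneg (mul_nonneg (Nat.cast_nonneg _) (hδ.le.trans hδ_le))]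
    _ ≤ |x| ^ m / (m.factorial * δ) := by gcongr
    _ = δ⁻¹ * (|x| ^ m / m.factorial) := by field_simp

theorem continuous_besselClifford (hα : 0 < α) : Continuous (besselClifford α) := by
  refine continuous_of_cover_nhds (s := fun R : ℝ => Metric.ball 0 R)
    (fun x => ⟨|x| + 1, Metric.isOpen_ball.mem_nhds (by simp)⟩) fun R => ?_
  refine continuousOn_tsum (fun m => by fun_prop)
    (summable_norm_besselClifford_term hα R) fun m x hx => ?_
  have hxR : ‖x‖ ≤ ‖R‖ := (mem_ball_zero_iff.1 hx).le.trans (le_abs_self R)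
  simp only [norm_div, norm_pow]
  gcongr

end BesselClifford

section BesselKernel

/-- The time-domain form of `s ^ (-α) * exp (c / s)`, for `t > 0`. By `besselKernel_eq` it is
`t ^ ((α - 1) / 2) * J_{α-1}(2√t)` for `c = -1` and `t ^ ((α - 1) / 2) * I_{α-1}(2√t)` for
`c = 1`. -/
noncomputable def besselKernel (α c t : ℝ) : ℝ :=
  ∑' m : ℕ, c ^ m / m.factorial * powerKernel (m + α) t

variable {α β c d t : ℝ}

theorem besselKernel_term_eq (α c : ℝ) (ht : 0 < t) (m : ℕ) :
    c ^ m / m.factorial * powerKernel (m + α) t =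
      t ^ (α - 1) * ((c * t) ^ m / (m.factorial * Real.Gamma (m + α))) := by
  rw [powerKernel_natCast_add ht, mul_pow]
  ring

theorem besselKernel_eq (α c : ℝ) (ht : 0 < t) :
    besselKernel α c t = t ^ (α - 1) * besselClifford α (c * t) := by
  simp only [besselKernel, besselKernel_term_eq α c ht, tsum_mul_left, besselClifford]

theorem summable_norm_besselKernel_term (hα : 0 < α) (c : ℝ) (ht : 0 < t) :
    Summable fun m : ℕ => ‖c ^ m / m.factorial * powerKernel (m + α) t‖ := by
  simp only [besselKernel_term_eq α c ht, norm_mul]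
  exact (summable_norm_besselClifford_term hα (c * t)).mul_left _

theorem besselKernel_zero (α t : ℝ) : besselKernel α 0 t = powerKernel α t := by
  rw [besselKernel, tsum_eq_single 0 fun m hm => by simp [hm]]
  simp

theorem summable_besselKernel_prod_term (hα : 0 < α) (c d : ℝ) (ht : 0 < t) :
    Summable fun p : ℕ × ℕ => |c ^ p.1 / p.1.factorial * (d ^ p.2 / p.2.factorial)| *
      powerKernel ((p.1 + p.2 : ℕ) + α) t := by
  obtain ⟨δ, hδ, hGamma⟩ := exists_pos_le_Gamma
  have hexp_prod := summable_mul_of_summable_norm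
    (summable_pow_div_factorial (c * t)).norm (summable_pow_div_factorial (d * t)).norm
  refine .of_nonneg_of_le
    (fun p => mul_nonneg (abs_nonneg _) (powerKernel_pos (by positivity) ht).le) (fun p => ?_)
    (hexp_prod.norm.mul_left (t ^ (α - 1) / δ))
  have hδ_le : δ ≤ Real.Gamma ((p.1 + p.2 : ℕ) + α) := hGamma _ (by positivity)
  calc _ ≤ |c ^ p.1 / p.1.factorial * (d ^ p.2 / p.2.factorial)| *
        (t ^ (α - 1) * (t ^ (p.1 + p.2) / δ)) := by
        rw [powerKernel_natCast_add ht]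
        gcongr
    _ = _ := by
        simp only [norm_eq_abs, abs_mul, abs_div, abs_pow, mul_pow, abs_of_pos ht, pow_add]
        ring

theorem lconv_besselKernel (hα : 0 < α) (hβ : 0 < β) (c d : ℝ) (ht : 0 < t) :
    lconv (besselKernel α c) (besselKernel β d) t = besselKernel (α + β) (c + d) t := by
  have hconv (i j : ℕ) : lconv (powerKernel (i + α)) (powerKernel (j + β)) t =
      powerKernel ((i + j : ℕ) + (α + β)) t := by
    rw [lconv_powerKernel (by positivity) (by positivity) ht, Nat.cast_add, add_add_add_comm]
  have hdouble := hasSum_lconv (a := fun i : ℕ => c ^ i / i.factorial)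
    (b := fun j : ℕ => d ^ j / j.factorial) (f := fun i => powerKernel (i + α))
    (g := fun j => powerKernel (j + β)) ht.le
    (fun _ _ hs => (powerKernel_pos (by positivity) hs.1).le)
    (fun _ _ hs => (powerKernel_pos (by positivity) hs.1).le)
    (fun _ _ => intervalIntegrable_powerKernel_mul (by positivity) (by positivity) ht)
    (fun _ hs => summable_norm_besselKernel_term hα c hs.1)
    (fun _ hs => summable_norm_besselKernel_term hβ d hs.1)
    (by simpa only [hconv] using summable_besselKernel_prod_term (add_pos hα hβ) c d ht)
  simp only [hconv] at hdouble
  exact (hasSum_add_pow_div_factorial (h := fun n => powerKernel (n + (α + β)) t)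
    hdouble).tsum_eq.symm

end BesselKernel

theorem statement17_general (r ν : ℝ) (hν : -1 < ν) (hν1 : r - 2 < ν) (hν2 : ν < r - 1)
    (κ k : ℝ → ℝ)
    (hκ : ∀ t : ℝ, 0 < t →
      κ t = ∑' m : ℕ, (-1) ^ m * t ^ ((m : ℝ) + ν) /
        (m.factorial * Real.Gamma ((m : ℝ) + ν + 1)))
    (hk : ∀ t : ℝ, 0 < t →
      k t = ∑' m : ℕ, t ^ ((m : ℝ) + r - ν - 2) /
        (m.factorial * Real.Gamma ((m : ℝ) + r - ν - 1))) :
    (∀ t : ℝ, 0 < t → lconv κ k t = t ^ (r - 1) / Real.Gamma r) ∧ Cm1 κ ∧ Cm10 k := by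
  have hα : 0 < ν + 1 := by linarith
  have hβ : 0 < r - ν - 1 := by linarith
  have hκ_eq (t : ℝ) (ht : 0 < t) : κ t = besselKernel (ν + 1) (-1) t := by
    rw [hκ t ht, besselKernel]
    refine tsum_congr fun m => ?_
    rw [powerKernel, div_mul_div_comm]
    ring_nf
  have hk_eq (t : ℝ) (ht : 0 < t) : k t = besselKernel (r - ν - 1) 1 t := by
    rw [hk t ht, besselKernel]
    refine tsum_congr fun m => ?_
    rw [powerKernel, div_mul_div_comm, one_pow, one_mul]
    ring_nf
  refine ⟨fun t ht => ?_,
    ⟨ν + 1 - 1, by linarith, fun t => besselClifford (ν + 1) (-1 * t), ?_, ?_⟩,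
    ⟨r - ν - 1 - 1, by linarith, by linarith, fun t => besselClifford (r - ν - 1) (1 * t), ?_, ?_⟩⟩
  · calc lconv κ k t
        = lconv (besselKernel (ν + 1) (-1)) (besselKernel (r - ν - 1) 1) t :=
          lconv_congr ht.le (fun s hs => hκ_eq s hs.1) fun s hs => hk_eq s hs.1
      _ = besselKernel (ν + 1 + (r - ν - 1)) (-1 + 1) t := lconv_besselKernel hα hβ _ _ ht
      _ = powerKernel r t := by
          rw [neg_add_cancel, besselKernel_zero, show ν + 1 + (r - ν - 1) = r by ring]
  · exact ((continuous_besselClifford hα).comp (continuous_const_mul _)).continuousOn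
  · exact fun t ht => (hκ_eq t ht).trans (besselKernel_eq _ _ ht)
  · exact ((continuous_besselClifford hβ).comp (continuous_const_mul _)).continuousOn
  · exact fun t ht => (hk_eq t ht).trans (besselKernel_eq _ _ ht)

/-- For `n ≥ 2` and `n - 2 < ν < n - 1`, the kernels
`κ(t) = ∑_{m} (-1)^m t^{m+ν}/(m! Γ(m+ν+1)) = t^{ν/2} J_ν(2√t)` and
`k(t) = ∑_{m} t^{m+n-ν-2}/(m! Γ(m+n-ν-1)) = t^{(n-ν)/2-1} I_{n-ν-2}(2√t)`
satisfy `(κ * k)(t) = t^{n-1}/(n-1)!` for `t > 0`, `κ ∈ C_{-1}(0,∞)` and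
`k ∈ C_{-1,0}(0,∞)`; i.e. the pair `(κ, k)` belongs to `L_n`. -/
theorem statement17 (n : ℕ) (hn : 2 ≤ n) (ν : ℝ)
    (hν1 : (n : ℝ) - 2 < ν) (hν2 : ν < (n : ℝ) - 1)
    (κ k : ℝ → ℝ)
    (hκ : ∀ t : ℝ, 0 < t →
      κ t = ∑' m : ℕ, (-1) ^ m * t ^ ((m : ℝ) + ν) /
        (m.factorial * Real.Gamma ((m : ℝ) + ν + 1)))
    (hk : ∀ t : ℝ, 0 < t →
      k t = ∑' m : ℕ, t ^ ((m : ℝ) + (n : ℝ) - ν - 2) /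
        (m.factorial * Real.Gamma ((m : ℝ) + (n : ℝ) - ν - 1))) :
    (∀ t : ℝ, 0 < t → lconv κ k t = t ^ (n - 1) / (n - 1).factorial) ∧
      Cm1 κ ∧ Cm10 k := by
  obtain ⟨n, rfl⟩ := Nat.exists_eq_add_of_le' (one_le_two.trans hn)
  have hn' : (2 : ℝ) ≤ (n + 1 : ℕ) := by exact_mod_cast hn
  simpa [Real.Gamma_nat_eq_factorial] using
    statement17_general (n + 1 : ℕ) ν (by linarith) hν1 hν2 κ k hκ hk
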